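/- arXiv:1704.04414 — 5 statements merged into one kernel-verified Lean document; each statement's English description precedes it below -/
import Mathlib

section
/- Let C be a small category and F : C ⥤ C a functor. If the continuous map |N F| : |N C| ⟶ |N C| induced on the geometric realization of the nerve has a fixed point (a point p with |N F|(p) = p), then F has a strict fixed point, i.e., there exists an object X of C with F(X) = X. -/
open CategoryTheory

/-- The continuous map `|N F| : |N C| ⟶ |N C|` induced by an endofunctor `F : C ⥤ C`
on the geometric realization of the nerve of `C`. -/
noncomputable def nerveRealizationMap {C : Type} [SmallCategory C] (F : C ⥤ C) :
    SSet.toTop.obj (nerve C) ⟶ SSet.toTop.obj (nerve C) :=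
  SSet.toTop.map (nerveFunctor.map (X := Cat.of C) (Y := Cat.of C) F.toCatHom)

/-!
Assign to a point of a geometric realization, given in barycentric coordinates on a simplex, the
first vertex of that simplex whose coordinate is nonzero. Monotone maps of simplices respect this
choice, so it yields a function `|X| → X₀` natural in the simplicial set `X`, which carries a fixed
point of `|f|` to a fixed vertex of `f`. The function is generally not continuous for the discrete
topology on `X₀`; giving `X₀` the indiscrete topology makes it a morphism of spaces, so that it can
be constructed by adjunction.
-/

universe u

open Simplicial Opposite

section StdSimplex

variable {S ι κ : Type*} [Semiring S] [PartialOrder S] [Fintype ι] [Fintype κ]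

lemma support_stdSimplex_nonempty [Nontrivial S] (t : stdSimplex S ι) :
    (Function.support t).Nonempty := by
  rw [Function.support_nonempty_iff]
  intro ht
  simpa [ht] using stdSimplex.sum_eq_one t

lemma support_stdSimplex_map [IsOrderedRing S] (f : ι → κ) (t : stdSimplex S ι) :
    Function.support (stdSimplex.map f t) = f '' Function.support t := by
  classical
  ext j
  rw [Function.mem_support, stdSimplex.map_coe, FunOnFinite.linearMap_apply_apply, ne_eq,
    Finset.sum_eq_zero_iff_of_nonneg fun i _ ↦ stdSimplex.zero_le t i]
  simp [and_comm]

variable [LinearOrder ι] [LinearOrder κ] [Nontrivial S]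

/-- The first vertex of the standard simplex at which the barycentric coordinate of `t` is nonzero,
that is, the first vertex of the open face containing `t`. -/
noncomputable def firstVertex (t : stdSimplex S ι) : ι :=
  (Function.support t).toFinite.toFinset.min' <| by
    simpa only [Set.Finite.toFinset_nonempty] using support_stdSimplex_nonempty t

lemma isLeast_firstVertex (t : stdSimplex S ι) :
    IsLeast (Function.support t) (firstVertex t) := by
  simpa only [firstVertex, Set.Finite.coe_toFinset] using
    Finset.isLeast_min' (Function.support t).toFinite.toFinset _

lemma firstVertex_map [IsOrderedRing S] {f : ι → κ} (hf : Monotone f) (t : stdSimplex S ι) :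
    firstVertex (stdSimplex.map f t) = f (firstVertex t) := by
  refine (isLeast_firstVertex _).unique ?_
  rw [support_stdSimplex_map]
  exact hf.map_isLeast (isLeast_firstVertex t)

end StdSimplex

section SimplicialSet

variable {X Y : SSet.{u}}

/-- The `i`-th vertex of a simplex `x` of a simplicial set. -/
def simplexVertex {n : SimplexCategoryᵒᵖ} (x : X.obj n) (i : Fin (n.unop.len + 1)) : X _⦋0⦌ :=
  X.map (SimplexCategory.const ⦋0⦌ n.unop i).op x

lemma simplexVertex_map {m n : SimplexCategoryᵒᵖ} (θ : m ⟶ n) (x : X.obj m)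
    (i : Fin (n.unop.len + 1)) :
    simplexVertex (X.map θ x) i = simplexVertex x (θ.unop.toOrderHom i) := by
  simp only [simplexVertex, ← Functor.map_comp_apply]
  rfl

lemma simplexVertex_app (f : X ⟶ Y) {n : SimplexCategoryᵒᵖ} (x : X.obj n)
    (i : Fin (n.unop.len + 1)) :
    simplexVertex (f.app n x) i = f.app _ (simplexVertex x i) :=
  (NatTrans.naturality_apply f _ x).symm

/-- The map sending a simplex `x` of `X` to the singular simplex `t ↦ x_{firstVertex t}` of the
vertex set of `X`, endowed with the indiscrete topology. -/
noncomputable def toSingularVertices (X : SSet.{u}) :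
    X ⟶ TopCat.toSSet.obj (TopCat.trivial.obj (X _⦋0⦌)) where
  app n := TypeCat.ofHom fun x ↦ (TopCat.toSSetObjEquiv _ n).symm
    ⟨fun t ↦ simplexVertex x (firstVertex t), continuous_top⟩
  naturality m n θ := by
    ext x
    refine (TopCat.toSSetObjEquiv _ n).injective (ContinuousMap.ext fun t ↦ ?_)
    calc simplexVertex (X.map θ x) (firstVertex t)
      _ = simplexVertex x (θ.unop.toOrderHom (firstVertex t)) := simplexVertex_map ..
      _ = simplexVertex x (firstVertex (stdSimplex.map θ.unop.toOrderHom t)) := by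
        rw [firstVertex_map θ.unop.toOrderHom.monotone]

lemma toSingularVertices_naturality (f : X ⟶ Y) :
    f ≫ toSingularVertices Y =
      toSingularVertices X ≫ TopCat.toSSet.map (TopCat.trivial.map (f.app (op ⦋0⦌))) := by
  ext n x
  refine (TopCat.toSSetObjEquiv _ n).injective (ContinuousMap.ext fun t ↦ ?_)
  exact simplexVertex_app f x (firstVertex t)

/-- The function sending a point of the geometric realization of `X` to the first vertex of the open
cell containing it. -/
noncomputable def realizationFirstVertex (X : SSet.{u}) : SSet.toTop.obj X → X _⦋0⦌ :=
  (sSetTopAdj.homEquiv X (TopCat.trivial.obj (X _⦋0⦌))).symm (toSingularVertices X)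

lemma realizationFirstVertex_map (f : X ⟶ Y) (p : SSet.toTop.obj X) :
    realizationFirstVertex Y (SSet.toTop.map f p) =
      f.app (op ⦋0⦌) (realizationFirstVertex X p) := by
  have comm := congrArg (sSetTopAdj.homEquiv _ _).symm (toSingularVertices_naturality f)
  rw [Adjunction.homEquiv_naturality_left_symm, Adjunction.homEquiv_naturality_right_symm] at comm
  exact ConcreteCategory.congr_hom comm p

theorem exists_strict_fixed_point_of_realization_fixed_point_general (f : X ⟶ X)
    (p : SSet.toTop.obj X) (hp : SSet.toTop.map f p = p) :
    ∃ x : X _⦋0⦌, f.app (op ⦋0⦌) x = x :=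
  ⟨realizationFirstVertex X p, by rw [← realizationFirstVertex_map, hp]⟩

end SimplicialSet

/-- If the continuous map `|N F| : |N C| ⟶ |N C|` induced on the geometric realization
of the nerve has a fixed point, then `F` has a strict fixed point, i.e. an object `X`
with `F(X) = X`. -/
theorem exists_strict_fixed_point_of_realization_fixed_point {C : Type}
    [SmallCategory C] (F : C ⥤ C) (p : SSet.toTop.obj (nerve C))
    (hp : nerveRealizationMap F p = p) :
    ∃ X : C, F.obj X = X := by
  obtain ⟨x, hx⟩ :=
    exists_strict_fixed_point_of_realization_fixed_point_general (nerveMap F) p hp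
  exact ⟨nerveEquiv x, congrArg nerveEquiv hx⟩
end

section
/- Let C be a small category with an initial object such that the geometric realization |N C| of its nerve is a compact topological space. Then every functor F : C ⥤ C has a strict fixed point, i.e., there exists an object X of C with F(X) = X. -/
open CategoryTheory

/-!
Suppose `X ⟶ F X` but no iterate `Fⁿ X` is fixed. Then `X ⟶ F X ⟶ F² X ⟶ ⋯` has distinct
consecutive objects, so its initial segments are nondegenerate simplices of `N C` of every
dimension. This is impossible because a simplicial set with compact realization is
finite-dimensional.

For the latter, let `x` be an `n`-simplex and consider, for each `k`, the polynomial
`∑_f ∏_l t_{f l}` in the barycentric coordinates of the point, where `f` runs over the maps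
`[k] ⟶ [n]` such that `f^* x` is nondegenerate. These polynomials are compatible with all
simplicial operators, so they define a function on the realization. They vanish for `n < k`, so a
sum over all `k` with arbitrary weights is still continuous, and the weights can be chosen such that
its value at the barycenter of a nondegenerate `n`-simplex is at least `n`.
-/

universe u v

section FacePolynomial

open Simplicial Opposite

variable {X : SSet.{u}} {Δ Δ' : SimplexCategory}

/-- The operators `f : ⦋k⦌ ⟶ Δ` along which the simplex `x` pulls back to a nondegenerate
`k`-simplex. -/
noncomputable def nonDegenerateFaces (x : X.obj (op Δ)) (k : ℕ) : Finset (⦋k⦌ ⟶ Δ) :=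
  (Set.toFinite {f | X.map f.op x ∈ X.nonDegenerate k}).toFinset

@[simp]
lemma mem_nonDegenerateFaces {x : X.obj (op Δ)} {k : ℕ} {f : ⦋k⦌ ⟶ Δ} :
    f ∈ nonDegenerateFaces x k ↔ X.map f.op x ∈ X.nonDegenerate k := by
  simp [nonDegenerateFaces]

lemma mono_of_mem_nonDegenerateFaces {x : X.obj (op Δ)} {k : ℕ} {f : ⦋k⦌ ⟶ Δ}
    (hf : f ∈ nonDegenerateFaces x k) : Mono f :=
  X.mono_of_nonDegenerate ⟨_, mem_nonDegenerateFaces.1 hf⟩ f x rfl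

lemma mem_nonDegenerateFaces_map {x : X.obj (op Δ)} {k : ℕ} {θ : Δ' ⟶ Δ} {g : ⦋k⦌ ⟶ Δ'} :
    g ∈ nonDegenerateFaces (X.map θ.op x) k ↔ g ≫ θ ∈ nonDegenerateFaces x k := by
  simp

/-- The sum over the nondegenerate `k`-dimensional faces `f` of `x` of the products of the
barycentric coordinates of `t` at the vertices of `f`: a polynomial function of degree `k + 1`. -/
noncomputable def facePolynomial (x : X.obj (op Δ)) (k : ℕ)
    (t : stdSimplex ℝ (Fin (Δ.len + 1))) : ℝ :=
  ∑ f ∈ nonDegenerateFaces x k, ∏ l, t (f l)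

lemma exists_lift_of_mono {Δ'' : SimplexCategory} (f : Δ'' ⟶ Δ) [Mono f] (θ : Δ' ⟶ Δ)
    (p : Fin (Δ''.len + 1) → Fin (Δ'.len + 1)) (hp : ∀ l, θ (p l) = f l) :
    ∃ g : Δ'' ⟶ Δ', g ≫ θ = f ∧ ∀ l, g l = p l := by
  have f_strictMono : StrictMono f :=
    f.toOrderHom.monotone.strictMono_of_injective (SimplexCategory.mono_iff_injective.1 ‹_›)
  have p_strictMono : StrictMono p := fun i j hij ↦
    θ.toOrderHom.monotone.reflect_lt (show θ (p i) < θ (p j) by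
      simpa only [hp] using f_strictMono hij)
  refine ⟨SimplexCategory.Hom.mk ⟨p, p_strictMono.monotone⟩, ?_, fun _ ↦ rfl⟩
  ext l : 3
  exact hp l

lemma facePolynomial_map (θ : Δ' ⟶ Δ) (x : X.obj (op Δ)) (k : ℕ)
    (t : stdSimplex ℝ (Fin (Δ'.len + 1))) :
    facePolynomial (X.map θ.op x) k t = facePolynomial x k (stdSimplex.map θ t) := by
  classical
  calc facePolynomial (X.map θ.op x) k t
    _ = ∑ f ∈ nonDegenerateFaces x k, ∑ g ∈ nonDegenerateFaces (X.map θ.op x) k with g ≫ θ = f,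
        ∏ l, t (g l) :=
      (Finset.sum_fiberwise_of_maps_to (fun _ hg ↦ mem_nonDegenerateFaces_map.1 hg) _).symm
    _ = ∑ f ∈ nonDegenerateFaces x k, ∑ p ∈ Fintype.piFinset fun l ↦ {i | θ i = f l},
        ∏ l, t (p l) := ?_
    _ = facePolynomial x k (stdSimplex.map θ t) := by
      simp only [facePolynomial, stdSimplex.map_coe, FunOnFinite.linearMap_apply_apply,
        Finset.prod_univ_sum]
  -- A nondegenerate face `f` is injective, so every lift of `f` along `θ` is monotone.
  refine Finset.sum_congr rfl fun f hf ↦ ?_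
  have := mono_of_mem_nonDegenerateFaces hf
  refine Finset.sum_bij (fun g _ ↦ ⇑g) (fun g hg ↦ ?_) (fun g _ g' _ h ↦ ?_) (fun p hp ↦ ?_)
    fun _ _ ↦ rfl
  · obtain rfl := (Finset.mem_filter.1 hg).2
    simp
  · ext l : 3
    exact congrFun h l
  · obtain ⟨g, rfl, hg⟩ := exists_lift_of_mono f θ p (by simpa using hp)
    exact ⟨g, by simpa using hf, funext hg⟩

lemma facePolynomial_eq_zero {x : X.obj (op Δ)} {k : ℕ} (hk : Δ.len < k) :
    facePolynomial x k = 0 := by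
  funext t
  refine Finset.sum_eq_zero fun f hf ↦ ?_
  have := mono_of_mem_nonDegenerateFaces hf
  exact absurd (SimplexCategory.len_le_of_mono f) hk.not_ge

lemma facePolynomial_nonneg (x : X.obj (op Δ)) (k : ℕ) (t : stdSimplex ℝ (Fin (Δ.len + 1))) :
    0 ≤ facePolynomial x k t :=
  Finset.sum_nonneg fun _ _ ↦ Finset.prod_nonneg fun _ _ ↦ stdSimplex.zero_le t _

lemma continuous_facePolynomial (x : X.obj (op Δ)) (k : ℕ) : Continuous (facePolynomial x k) :=
  continuous_finsetSum _ fun _ _ ↦ continuous_finsetProd _ fun _ _ ↦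
    (continuous_apply _).comp continuous_subtype_val

lemma inv_pow_le_facePolynomial_barycenter {n : ℕ} {x : X _⦋n⦌} (hx : x ∈ X.nonDegenerate n) :
    ((n + 1 : ℝ)⁻¹) ^ (n + 1) ≤ facePolynomial x n stdSimplex.barycenter := by
  have id_mem : 𝟙 ⦋n⦌ ∈ nonDegenerateFaces x n := by simpa using hx
  calc ((n + 1 : ℝ)⁻¹) ^ (n + 1) = ∏ _l : Fin (n + 1), (Fintype.card (Fin (n + 1)) : ℝ)⁻¹ := by simp
    _ ≤ facePolynomial x n stdSimplex.barycenter :=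
        Finset.single_le_sum (f := fun f ↦ ∏ l, stdSimplex.barycenter (f l))
          (fun _ _ ↦ Finset.prod_nonneg fun _ _ ↦ stdSimplex.zero_le _ _) id_mem

/-- The sum of all face polynomials of `x`, weighted so that it is at least `n` at the barycenter
of a nondegenerate `n`-simplex. Only the terms with `k ≤ Δ.len` are nonzero. -/
noncomputable def faceSeries (x : X.obj (op Δ)) (t : stdSimplex ℝ (Fin (Δ.len + 1))) : ℝ :=
  ∑ᶠ k : ℕ, k * (k + 1 : ℝ) ^ (k + 1) * facePolynomial x k t

lemma faceSeries_eq_sum (x : X.obj (op Δ)) (t : stdSimplex ℝ (Fin (Δ.len + 1))) :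
    faceSeries x t =
      ∑ k ∈ Finset.range (Δ.len + 1), k * (k + 1 : ℝ) ^ (k + 1) * facePolynomial x k t := by
  refine finsum_eq_sum_of_support_subset _ fun k hk ↦ ?_
  by_contra h
  exact hk (by simp [facePolynomial_eq_zero (by simpa using h : Δ.len < k)])

lemma faceSeries_map (θ : Δ' ⟶ Δ) (x : X.obj (op Δ)) (t : stdSimplex ℝ (Fin (Δ'.len + 1))) :
    faceSeries (X.map θ.op x) t = faceSeries x (stdSimplex.map θ t) := by
  simp only [faceSeries, facePolynomial_map]

lemma continuous_faceSeries (x : X.obj (op Δ)) : Continuous (faceSeries x) := by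
  simp only [funext (faceSeries_eq_sum x)]
  exact continuous_finsetSum _ fun k _ ↦ continuous_const.mul (continuous_facePolynomial x k)

lemma le_faceSeries_barycenter {n : ℕ} {x : X _⦋n⦌} (hx : x ∈ X.nonDegenerate n) :
    n ≤ faceSeries x stdSimplex.barycenter := by
  rw [faceSeries_eq_sum]
  calc (n : ℝ) = n * (n + 1 : ℝ) ^ (n + 1) * ((n + 1 : ℝ)⁻¹) ^ (n + 1) := by
        rw [mul_assoc, ← mul_pow, mul_inv_cancel₀ (by positivity), one_pow, mul_one]
    _ ≤ n * (n + 1 : ℝ) ^ (n + 1) * facePolynomial x n stdSimplex.barycenter := by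
        gcongr
        exact inv_pow_le_facePolynomial_barycenter hx
    _ ≤ ∑ k ∈ Finset.range (n + 1),
          k * (k + 1 : ℝ) ^ (k + 1) * facePolynomial x k stdSimplex.barycenter :=
        Finset.single_le_sum
          (f := fun k : ℕ ↦ k * (k + 1 : ℝ) ^ (k + 1) * facePolynomial x k stdSimplex.barycenter)
          (fun k _ ↦ mul_nonneg (by positivity) (facePolynomial_nonneg x k _))
          (Finset.self_mem_range_succ n)

variable (X) in
/-- The family of functions `faceSeries` as a map into the singular simplicial set of the real
line. -/
noncomputable def faceSeriesHom : X ⟶ TopCat.toSSet.obj (TopCat.of (ULift.{u} ℝ)) where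
  app Δ := TypeCat.ofHom fun x ↦ (TopCat.toSSetObjEquiv _ Δ).symm
    ⟨fun t ↦ ULift.up (faceSeries x t), continuous_uliftUp.comp (continuous_faceSeries x)⟩
  naturality Δ Δ' θ := by
    ext x
    apply (TopCat.toSSetObjEquiv _ Δ').injective
    exact ContinuousMap.ext fun t ↦ congrArg ULift.up (faceSeries_map θ.unop x t)

end FacePolynomial

section CompactRealization

open Simplicial Opposite

theorem exists_isCompact_forall_toSSetObjEquiv_mem {X : SSet.{u}} [CompactSpace |X|]
    {Y : TopCat.{u}} (φ : X ⟶ TopCat.toSSet.obj Y) :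
    ∃ K : Set Y, IsCompact K ∧
      ∀ Δ (x : X.obj Δ) t, TopCat.toSSetObjEquiv Y Δ (φ.app Δ x) t ∈ K := by
  let ψ : |X| ⟶ Y := (sSetTopAdj.homEquiv X Y).symm φ
  refine ⟨Set.range ψ, isCompact_range ψ.hom.continuous, fun Δ x t ↦ ?_⟩
  have hφ : φ = sSetTopAdj.unit.app X ≫ TopCat.toSSet.map ψ :=
    ((sSetTopAdj.homEquiv X Y).apply_symm_apply φ).symm.trans (sSetTopAdj.homEquiv_unit ..)
  rw [hφ]
  exact ⟨((sSetTopAdj.unit.app X).app Δ x).down.hom ⟨t⟩, rfl⟩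

theorem exists_hasDimensionLT_of_compactSpace_toTop (X : SSet.{u}) [CompactSpace |X|] :
    ∃ d, X.HasDimensionLT d := by
  obtain ⟨K, hK, mem_K⟩ := exists_isCompact_forall_toSSetObjEquiv_mem (faceSeriesHom X)
  obtain ⟨B, hB⟩ := (hK.image continuous_uliftDown).bddAbove
  have faceSeries_le {n : ℕ} (x : X _⦋n⦌) : faceSeries x stdSimplex.barycenter ≤ B :=
    hB ⟨_, mem_K _ x stdSimplex.barycenter, rfl⟩
  obtain ⟨d, hd⟩ := exists_nat_gt B
  refine ⟨d, ⟨fun n hn ↦ Set.eq_univ_of_forall fun x ↦ ?_⟩⟩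
  by_contra hx
  have : (d : ℝ) ≤ n := mod_cast hn
  linarith [le_faceSeries_barycenter hx, faceSeries_le x]

end CompactRealization

section Nerve

variable {C : Type u} [Category.{v} C]

open Simplicial in
lemma mem_nonDegenerate_nerve_of_obj_ne {n : ℕ} (s : (nerve C) _⦋n⦌)
    (hs : ∀ i : Fin n, s.obj i.castSucc ≠ s.obj i.succ) :
    s ∈ (nerve C).nonDegenerate n := by
  cases n with
  | zero => exact (nerve C).nondegenerate_zero ▸ Set.mem_univ s
  | succ n =>
    intro h
    rw [SSet.degenerate_eq_iUnion_range_σ] at h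
    obtain ⟨i, s, rfl⟩ := Set.mem_iUnion.1 h
    exact hs i <| congrArg s.obj <|
      (Fin.predAbove_castSucc_self i).trans (Fin.predAbove_succ_self i).symm

lemma exists_obj_eq_obj_succ_of_hasDimensionLT (d : ℕ) [(nerve C).HasDimensionLT d] (G : ℕ ⥤ C) :
    ∃ n < d, G.obj n = G.obj (n + 1) := by
  by_contra! h
  let σ : ComposableArrows C d := (Fin.val_strictMono (n := d + 1)).monotone.functor ⋙ G
  have hσ := mem_nonDegenerate_nerve_of_obj_ne σ fun i ↦ h i i.isLt
  exact (SSet.dim_lt_of_nonDegenerate _ ⟨_, hσ⟩ d).false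

/-- The morphisms of the sequence `X ⟶ F X ⟶ F² X ⟶ ⋯` generated by `f : X ⟶ F X`. -/
def iterateHom (F : C ⥤ C) : {X : C} → (X ⟶ F.obj X) → (n : ℕ) →
    (F.obj^[n] X ⟶ F.obj^[n + 1] X)
  | _, f, 0 => f
  | _, f, n + 1 => iterateHom F (F.map f) n

theorem exists_isFixedPt_iterate_of_hasDimensionLT (d : ℕ) [(nerve C).HasDimensionLT d]
    (F : C ⥤ C) {X : C} (f : X ⟶ F.obj X) :
    ∃ n < d, Function.IsFixedPt F.obj (F.obj^[n] X) := by
  obtain ⟨n, hn, h⟩ :=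
    exists_obj_eq_obj_succ_of_hasDimensionLT d (Functor.ofSequence (iterateHom F f))
  exact ⟨n, hn, (Function.iterate_succ_apply' F.obj n X).symm.trans h.symm⟩

end Nerve

theorem exists_strict_fixed_point_of_hasInitial_of_compact_general {C : Type u} [Category.{v} C]
    [CompactSpace (SSet.toTop.obj (nerve C))] (F : C ⥤ C) {X : C} (f : X ⟶ F.obj X) :
    ∃ n : ℕ, Function.IsFixedPt F.obj (F.obj^[n] X) := by
  obtain ⟨d, _⟩ := exists_hasDimensionLT_of_compactSpace_toTop (nerve C)
  obtain ⟨n, -, hn⟩ := exists_isFixedPt_iterate_of_hasDimensionLT d F f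
  exact ⟨n, hn⟩

/-- Let `C` be a small category with an initial object such that the geometric
realization `|N C|` of its nerve is compact.  Then every endofunctor `F : C ⥤ C`
has a strict fixed point, i.e. an object `X` with `F(X) = X`. -/
theorem exists_strict_fixed_point_of_hasInitial_of_compact {C : Type}
    [SmallCategory C] [Limits.HasInitial C]
    [CompactSpace (SSet.toTop.obj (nerve C))] (F : C ⥤ C) :
    ∃ X : C, F.obj X = X := by
  obtain ⟨n, hn⟩ := exists_strict_fixed_point_of_hasInitial_of_compact_general F
    (Limits.initial.to (F.obj (⊥_ C)))
  exact ⟨_, hn⟩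
end

section
/- Let C be a category with pullbacks, σ : X ⟶ Y a morphism in C. If the base-change functor τ⁻¹(σ) : C/Y ⥤ C/X given by pulling back along σ is an equivalence of categories, then σ is a split epimorphism. -/
open CategoryTheory

universe v u

/-!
Base change along `σ` has the left adjoint "compose with `σ`", and the counit at the terminal object
`𝟙 Y` of `C/Y` is `σ` itself, up to the isomorphism `Y ×_Y X ≅ X`. If base change is full, the
components of the counit are split monomorphisms, and a split monomorphism into a terminal object is
invertible because its retraction is also a section.
-/

theorem isIso_of_isSplitMono_of_isTerminal {C : Type*} [Category* C] {A T : C}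
    (hT : Limits.IsTerminal T) (f : A ⟶ T) [IsSplitMono f] : IsIso f :=
  ⟨retraction f, IsSplitMono.id f, hT.hom_ext _ _⟩

theorem isIso_counit_app_of_full_of_isTerminal {C D : Type*} [Category* C] [Category* D]
    {L : C ⥤ D} {R : D ⥤ C} (adj : L ⊣ R) [R.Full] {T : D} (hT : Limits.IsTerminal T) :
    IsIso (adj.counit.app T) :=
  isIso_of_isSplitMono_of_isTerminal hT _

theorem isIso_of_isIso_mapPullbackAdj_counit_app_id {C : Type*} [Category* C] {X Y : C}
    (σ : X ⟶ Y) [Limits.HasPullbacksAlong σ]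
    [IsIso ((Over.mapPullbackAdj σ).counit.app (Over.mk (𝟙 Y)))] : IsIso σ := by
  let ε := (Over.mapPullbackAdj σ).counit.app (Over.mk (𝟙 Y))
  have counit_left : ε.left = Limits.pullback.snd (𝟙 Y) σ ≫ σ := by
    simpa using Over.w ε
  have : IsIso (Limits.pullback.snd (𝟙 Y) σ ≫ σ) :=
    counit_left ▸ Functor.map_isIso (Over.forget Y) ε
  exact IsIso.of_isIso_comp_left (Limits.pullback.snd (𝟙 Y) σ) σ

theorem isSplitEpi_of_baseChange_equivalence_general {C : Type*} [Category* C] {X Y : C}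
    (σ : X ⟶ Y) [Limits.HasPullbacksAlong σ] [(Over.pullback σ).Full] : IsIso σ :=
  have := isIso_counit_app_of_full_of_isTerminal (Over.mapPullbackAdj σ) Over.mkIdTerminal
  isIso_of_isIso_mapPullbackAdj_counit_app_id σ

/-- Let `C` be a category with pullbacks and `σ : X ⟶ Y` a morphism.  If the
base-change functor `τ⁻¹(σ) = Over.pullback σ : C/Y ⥤ C/X` is an equivalence of
categories, then `σ` is a split epimorphism. -/
theorem isSplitEpi_of_baseChange_equivalence {C : Type u} [Category.{v} C]
    [Limits.HasPullbacks C] {X Y : C} (σ : X ⟶ Y)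
    (h : (Over.pullback σ).IsEquivalence) : IsSplitEpi σ :=
  have := h.full
  have : IsIso σ := isSplitEpi_of_baseChange_equivalence_general σ
  inferInstance
end

section
/- Let C be a category with pushouts, σ : X ⟶ Y a morphism in C. If the cobase-change functor s⁻¹(σ) : X/C ⥤ Y/C given by pushing out along σ is an equivalence of categories, then σ is a split monomorphism. -/
open CategoryTheory

universe v u

/-!
The functor `Under.pushout σ` is left adjoint to precomposition with `σ`, and the component at
`f : X ⟶ A` of the unit is the coprojection `A ⟶ A ⊔_X Y`. If `Under.pushout σ` is fully faithful,
the unit is invertible; at `f = 𝟙 X` the coprojection `X ⟶ X ⊔_X Y ≅ Y` is `σ` itself, so `σ` is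
even an isomorphism.
-/

section

variable {C : Type u} [Category.{v} C] {X Y : C}

theorem isIso_of_isIso_pushout_inl {A : C} (f : X ⟶ A) (g : X ⟶ Y) [Limits.HasPushout f g]
    [IsIso f] [IsIso (Limits.pushout.inl f g)] : IsIso g := by
  have : IsIso (g ≫ Limits.pushout.inr f g) := by
    rw [← Limits.pushout.condition]
    infer_instance
  exact IsIso.of_isIso_comp_right g (Limits.pushout.inr f g)

variable (σ : X ⟶ Y) [Limits.HasPushoutsAlong σ]

theorem forget_map_mapPushoutAdj_unit_app {A : C} (f : X ⟶ A) :
    (Under.forget X).map ((Under.mapPushoutAdj σ).unit.app (Under.mk f)) =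
      Limits.pushout.inl f σ :=
  congrArg (Under.forget X).map (Under.mapPushoutAdj_unit_app σ (Under.mk f))

variable [(Under.pushout σ).Full] [(Under.pushout σ).Faithful]

theorem isIso_pushout_inl_of_full_of_faithful {A : C} (f : X ⟶ A) :
    IsIso (Limits.pushout.inl f σ) := by
  rw [← forget_map_mapPushoutAdj_unit_app σ f]
  exact Functor.map_isIso (Under.forget X) ((Under.mapPushoutAdj σ).unit.app (Under.mk f))

theorem isSplitMono_of_coBaseChange_equivalence_general : IsIso σ :=
  have := isIso_pushout_inl_of_full_of_faithful σ (𝟙 X)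
  isIso_of_isIso_pushout_inl (𝟙 X) σ

end

/-- Let `C` be a category with pushouts and `σ : X ⟶ Y` a morphism.  If the
cobase-change functor `s⁻¹(σ) = Under.pushout σ : X/C ⥤ Y/C` is an equivalence of
categories, then `σ` is a split monomorphism. -/
theorem isSplitMono_of_coBaseChange_equivalence {C : Type u} [Category.{v} C]
    [Limits.HasPushouts C] {X Y : C} (σ : X ⟶ Y)
    (h : (Under.pushout σ).IsEquivalence) : IsSplitMono σ := by
  have := isSplitMono_of_coBaseChange_equivalence_general σ
  infer_instance
end

section
/- Let C be a balanced category with pullbacks and pushouts, F : C ⥤ C a functor, X an object of C, and σ : X ⟶ F(X) a morphism. Then σ is an isomorphism (i.e., (X, σ) is a fixed point of F) if and only if both the base-change functor τ⁻¹(σ) : C/F(X) ⥤ C/X (pulling back along σ) and the cobase-change functor s⁻¹(σ) : X/C ⥤ F(X)/C (pushing out along σ) are equivalences of categories. -/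
open CategoryTheory

universe v u

/-!
Base change along `σ : X ⟶ Y` is right adjoint to composition with `σ`, the functor
`Over.map σ : C/X ⥤ C/Y`, so one is an equivalence exactly when the other is. Now `Over.map σ` sends
the terminal object `𝟙 X` of `C/X` to `σ`. If `Over.map σ` is an equivalence, then `σ` is terminal
in `C/Y`, hence isomorphic to `𝟙 Y` there, which means that `σ` is an isomorphism. Dually, cobase
change is left adjoint to `Under.map σ`, which sends the initial object `𝟙 Y` of `Y/C` to `σ`.
-/

theorem isEquivalence_iff_of_adjunction {C D : Type*} [Category* C] [Category* D]
    {L : C ⥤ D} {R : D ⥤ C} (adj : L ⊣ R) : L.IsEquivalence ↔ R.IsEquivalence :=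
  ⟨fun _ ↦ adj.isEquivalence_right_of_isEquivalence_left,
    fun _ ↦ adj.isEquivalence_left_of_isEquivalence_right⟩

section

open Limits

variable {C : Type u} [Category.{v} C] {X Y : C} (σ : X ⟶ Y)

theorem isEquivalence_overMap_iff_isIso : (Over.map σ).IsEquivalence ↔ IsIso σ := by
  refine ⟨fun _ ↦ ?_, fun _ ↦ inferInstance⟩
  let toId : (Over.map σ).obj (Over.mk (𝟙 X)) ⟶ Over.mk (𝟙 Y) := Over.homMk σ
  have : IsIso toId :=
    isIso_of_isTerminal (Over.mkIdTerminal.isTerminalObj (Over.map σ)) Over.mkIdTerminal toId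
  exact inferInstanceAs (IsIso ((Over.forget Y).map toId))

theorem isEquivalence_underMap_iff_isIso : (Under.map σ).IsEquivalence ↔ IsIso σ := by
  refine ⟨fun _ ↦ ?_, fun _ ↦ inferInstance⟩
  let fromId : Under.mk (𝟙 X) ⟶ (Under.map σ).obj (Under.mk (𝟙 Y)) := Under.homMk σ
  have : IsIso fromId :=
    isIso_of_isInitial Under.mkIdInitial (Under.mkIdInitial.isInitialObj (Under.map σ)) fromId
  exact inferInstanceAs (IsIso ((Under.forget X).map fromId))

theorem isEquivalence_overPullback_iff_isIso [HasPullbacksAlong σ] :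
    (Over.pullback σ).IsEquivalence ↔ IsIso σ :=
  (isEquivalence_iff_of_adjunction (Over.mapPullbackAdj σ)).symm.trans
    (isEquivalence_overMap_iff_isIso σ)

theorem isEquivalence_underPushout_iff_isIso [HasPushoutsAlong σ] :
    (Under.pushout σ).IsEquivalence ↔ IsIso σ :=
  (isEquivalence_iff_of_adjunction (Under.mapPushoutAdj σ)).trans
    (isEquivalence_underMap_iff_isIso σ)

theorem isIso_iff_baseChange_coBaseChange_equivalence_general
    [HasPullbacksAlong σ] [HasPushoutsAlong σ] :
    [IsIso σ, (Over.pullback σ).IsEquivalence, (Under.pushout σ).IsEquivalence].TFAE := by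
  tfae_have 2 ↔ 1 := isEquivalence_overPullback_iff_isIso σ
  tfae_have 3 ↔ 1 := isEquivalence_underPushout_iff_isIso σ
  tfae_finish

end

/-- Let `C` be a balanced category with pullbacks and pushouts, `F : C ⥤ C` a functor,
`X` an object and `σ : X ⟶ F(X)` a morphism.  Then `σ` is an isomorphism (so that
`(X, σ)` is a fixed point of `F`) if and only if both the base-change functor
`τ⁻¹(σ) : C/F(X) ⥤ C/X` and the cobase-change functor `s⁻¹(σ) : X/C ⥤ F(X)/C` are
equivalences of categories. -/
theorem isIso_iff_baseChange_coBaseChange_equivalence {C : Type u} [Category.{v} C]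
    [Balanced C] [Limits.HasPullbacks C] [Limits.HasPushouts C]
    (F : C ⥤ C) (X : C) (σ : X ⟶ F.obj X) :
    IsIso σ ↔
      (Over.pullback σ).IsEquivalence ∧ (Under.pushout σ).IsEquivalence := by
  have tfae := isIso_iff_baseChange_coBaseChange_equivalence_general σ
  exact ⟨fun h ↦ ⟨(tfae.out 0 1).1 h, (tfae.out 0 2).1 h⟩, fun h ↦ (tfae.out 0 1).2 h.1⟩
end
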